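/- Let p and q be real numbers with p > 2, q > 2 and cos²(π/p) < sin²(π/q). Let y₀, y₁, y₂, y₃ be vectors in the Lorentzian space 𝕃^{3,1} = ℝ⁴ whose Gram matrix is the corner matrix of (1, 0, −cot²(π/p), −cos²(π/p)/(sin²(π/q) − cos²(π/p))), i.e., ⟨yᵢ, yⱼ⟩ equals the value at index max(i,j) of this sequence. Then, writing κᵢ = κ(yᵢ), one has κ₃² = (cos²(π/p)/(sin²(π/q) − cos²(π/p)))·(κ₀ − κ₁)² + (sin²(π/p)/(sin²(π/q) − cos²(π/p)))·(κ₁ − κ₂)² + (sin²(π/p)/cos²(π/q))·(κ₂ − κ₃)². -/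

import Mathlib

/-!
The consecutive differences `y₀ - y₁, y₁ - y₂, y₂ - y₃` together with `y₃` are pairwise
orthogonal for the Lorentzian product as soon as the Gramian of the `yᵢ` is a corner matrix, and
their norms are the consecutive differences of its corner values, all nonzero here. The vector
`x_N = e₃ + e₄` is lightlike, so expanding `⟨x_N, x_N⟩ = 0` in this orthogonal basis
(`sum_curv_sq_div_eq_zero`) gives `∑ κ(zᵢ)² / ⟨zᵢ, zᵢ⟩ = 0`, which is the claimed relation up
to a factor.
-/

open Finset Matrix

/-- The Lorentzian product on `ℝ^n`:
`⟨x, y⟩ = x₁y₁ + ⋯ + x_{n-1}y_{n-1} − x_n y_n`. -/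
noncomputable def lprod {n : ℕ} (x y : Fin n → ℝ) : ℝ :=
  ∑ i : Fin n, (if (i : ℕ) + 1 = n then -1 else 1) * x i * y i

/-- The curvature of a vector `x ∈ 𝕃^{d+1,1}`: `κ(x) = x_{d+2} − x_{d+1}`. -/
noncomputable def curv {d : ℕ} (x : Fin (d + 2) → ℝ) : ℝ :=
  x ⟨d + 1, by omega⟩ - x ⟨d, by omega⟩

open Real

lemma lprod_sub_left {n : ℕ} (x y z : Fin n → ℝ) :
    lprod (x - y) z = lprod x z - lprod y z := by
  simp only [lprod, Pi.sub_apply, ← Finset.sum_sub_distrib]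
  exact Finset.sum_congr rfl fun i _ => by ring

lemma lprod_sub_right {n : ℕ} (x y z : Fin n → ℝ) :
    lprod x (y - z) = lprod x y - lprod x z := by
  simp only [lprod, Pi.sub_apply, ← Finset.sum_sub_distrib]
  exact Finset.sum_congr rfl fun i _ => by ring

/-- Parseval's identity for the lightlike vector `x_N = e₃ + e₄` in an orthogonal basis `z` of
`𝕃^{3,1}` with `⟨zᵢ, zᵢ⟩ = nᵢ`. -/
lemma sum_curv_sq_div_eq_zero (z : Fin 4 → (Fin 4 → ℝ)) (n : Fin 4 → ℝ) (hn : ∀ i, n i ≠ 0)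
    (hz : ∀ i j, lprod (z i) (z j) = if i = j then n i else 0) :
    ∑ i, curv (z i) ^ 2 / n i = 0 := by
  let J : Matrix (Fin 4) (Fin 4) ℝ := diagonal ![1, 1, 1, -1]
  let M : Matrix (Fin 4) (Fin 4) ℝ := of z
  let E : Matrix (Fin 4) (Fin 4) ℝ := diagonal fun i => (n i)⁻¹
  have h : M * (J * Mᵀ * E) = 1 := by
    ext i j
    have hij := hz i j
    simp only [lprod, Fin.sum_univ_four] at hij
    have : (M * (J * Mᵀ * E)) i j = (if i = j then n i else 0) * (n j)⁻¹ := by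
      rw [← hij]
      simp [M, J, E, Matrix.mul_apply, Fin.sum_univ_four, Matrix.diagonal_apply]
      fin_cases j <;> simp <;> ring
    rw [this, Matrix.one_apply]
    split_ifs with e
    · rw [e, mul_inv_cancel₀ (hn j)]
    · simp
  -- A right inverse of a square matrix is a left inverse; this turns the orthogonality of the
  -- rows of `M` into dual relations between its columns.
  have h' : (J * Mᵀ * E) * M = 1 := mul_eq_one_comm.mp h
  have h22 := congrFun (congrFun h' 2) 2
  have h23 := congrFun (congrFun h' 2) 3
  have h33 := congrFun (congrFun h' 3) 3
  simp [M, J, E, Matrix.mul_apply, Fin.sum_univ_four, Matrix.diagonal_apply] at h22 h23 h33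
  simp only [curv, Fin.sum_univ_four, div_eq_mul_inv]
  change (z 0 3 - z 0 2) ^ 2 * _ + (z 1 3 - z 1 2) ^ 2 * _ + (z 2 3 - z 2 2) ^ 2 * _ +
    (z 3 3 - z 3 2) ^ 2 * _ = 0
  linear_combination h22 - 2 * h23 - h33

/-- **Descartes-type theorem for flags of Platonic solids `{p,q}`.** If `y₀, y₁, y₂, y₃`
are vectors of `𝕃^{3,1}` whose Gramian is the corner matrix of
`(1, 0, −cot²(π/p), −cos²(π/p)/(sin²(π/q) − cos²(π/p)))`, then their curvatures satisfy
the stated Descartes-type relation. -/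
theorem platonic_descartes_theorem (p q : ℝ) (hp : 2 < p) (hq : 2 < q)
    (hpq : cos (π / p) ^ 2 < sin (π / q) ^ 2)
    (y : Fin 4 → (Fin 4 → ℝ))
    (hgram : ∀ i j : Fin 4, lprod (y i) (y j) =
      ![(1 : ℝ), 0, -(cos (π / p) ^ 2 / sin (π / p) ^ 2),
          -(cos (π / p) ^ 2 / (sin (π / q) ^ 2 - cos (π / p) ^ 2))] (max i j)) :
    (curv (y 3)) ^ 2 =
      (cos (π / p) ^ 2 / (sin (π / q) ^ 2 - cos (π / p) ^ 2)) *
          (curv (y 0) - curv (y 1)) ^ 2 +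
        (sin (π / p) ^ 2 / (sin (π / q) ^ 2 - cos (π / p) ^ 2)) *
          (curv (y 1) - curv (y 2)) ^ 2 +
        (sin (π / p) ^ 2 / cos (π / q) ^ 2) * (curv (y 2) - curv (y 3)) ^ 2 := by
  have hπ := Real.pi_pos
  have hcos {r : ℝ} (hr : 2 < r) : 0 < cos (π / r) := by
    apply cos_pos_of_mem_Ioo
    constructor
    · have : 0 < π / r := by positivity
      linarith
    · exact div_lt_div_of_pos_left hπ (by norm_num) hr
  have hA : 0 < cos (π / p) ^ 2 := pow_pos (hcos hp) 2
  have hC : 0 < cos (π / q) ^ 2 := pow_pos (hcos hq) 2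
  have hS := sin_sq_add_cos_sq (π / p)
  have hB := sin_sq_add_cos_sq (π / q)
  generalize cos (π / p) ^ 2 = A at *
  generalize cos (π / q) ^ 2 = C at *
  generalize sin (π / p) ^ 2 = S at *
  generalize sin (π / q) ^ 2 = B at *
  have hS0 : 0 < S := by linarith
  have hBA : 0 < B - A := by linarith
  have hn2 : A * C / ((B - A) * S) = A / (B - A) - A / S := by
    rw [div_sub_div _ _ hBA.ne' hS0.ne']
    congr 1
    linear_combination A * (hB - hS)
  have key := sum_curv_sq_div_eq_zero ![y 0 - y 1, y 1 - y 2, y 2 - y 3, y 3]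
    ![1, A / S, A * C / ((B - A) * S), -(A / (B - A))]
    (by
      intro i
      fin_cases i
      · exact one_ne_zero
      · exact (div_pos hA hS0).ne'
      · exact (div_pos (mul_pos hA hC) (mul_pos hBA hS0)).ne'
      · exact neg_ne_zero.mpr (div_pos hA hBA).ne')
    (by
      rw [hn2]
      intro i j
      fin_cases i <;> fin_cases j <;>
        simp [lprod_sub_left, lprod_sub_right, hgram]; ring)
  have hcurv (x w : Fin 4 → ℝ) : curv (d := 2) (x - w) = curv (d := 2) x - curv (d := 2) w := by
    simp only [curv, Pi.sub_apply]
    ring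
  simp only [Fin.sum_univ_four, Matrix.cons_val, hcurv] at key
  field_simp at key ⊢
  linear_combination -key
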